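/- Let f : ℝ → ℝ be a polynomial of degree at most d, not identically zero on [0,1], and let S = sup_{t ∈ [0,1]} |f(t)| > 0. Then for every ε > 0, the Lebesgue measure of {t ∈ [0,1] : |f(t)| < ε} is at most 4·(ε/S)^{1/d}. (One-dimensional sub-level / (C,α)-good estimate.) -/

import Mathlib

open MeasureTheory Polynomial

lemma eval_lagrange (d : ℕ) (f : ℝ[X]) (hdeg : f.natDegree ≤ d) (v : ℕ → ℝ)
    (hv : Set.InjOn v (Finset.range (d + 1))) (x : ℝ) :
    f.eval x = ∑ i ∈ Finset.range (d + 1), f.eval (v i) *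
      ∏ j ∈ (Finset.range (d + 1)).erase i, (x - v j) / (v i - v j) := by
  have hd : f.degree < (Finset.range (d + 1)).card := by
    rw [Finset.card_range]
    exact lt_of_le_of_lt (Polynomial.natDegree_le_iff_degree_le.mp hdeg)
      (by exact_mod_cast Nat.lt_succ_self d)
  conv_lhs => rw [Lagrange.eq_interpolate hv hd]
  rw [Lagrange.interpolate_apply, eval_finsetSum]
  refine Finset.sum_congr rfl fun i _ => ?_
  rw [eval_mul, eval_C, Lagrange.basis, eval_prod]
  congr 1
  refine Finset.prod_congr rfl fun j _ => ?_
  simp only [Lagrange.basisDivisor, eval_mul, eval_C, eval_sub, eval_X]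
  rw [div_eq_inv_mul]

lemma T_le_pow (x : ℝ) (hx : 1 ≤ x) (n : ℕ) :
    (Chebyshev.T ℝ n).eval x ≤ (2 * x) ^ n := by
  induction n using Nat.twoStepInduction with
  | zero => simp
  | one => simp; linarith
  | more n _ ih =>
    have h := Chebyshev.one_le_eval_T_real (n : ℤ) hx
    have e : (Chebyshev.T ℝ ((n + 2 : ℕ) : ℤ)).eval x =
        2 * x * (Chebyshev.T ℝ ((n + 1 : ℕ) : ℤ)).eval x - (Chebyshev.T ℝ (n : ℤ)).eval x := by
      push_cast
      rw [Chebyshev.T_add_two]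
      simp
    rw [e, pow_succ]
    nlinarith

lemma T_eq_sum (d : ℕ) (z : ℝ) :
    (Chebyshev.T ℝ d).eval z = ∑ i ∈ Finset.range (d + 1),
      ∏ j ∈ (Finset.range (d + 1)).erase i,
        (z - Chebyshev.node d j) / |Chebyshev.node d i - Chebyshev.node d j| := by
  rw [eval_lagrange d (Chebyshev.T ℝ d) (by simp) (Chebyshev.node d)
    (Chebyshev.strictAntiOn_node d).injOn z]
  refine Finset.sum_congr rfl fun i hi => ?_
  have hi' : i ≤ d := Finset.mem_range_succ_iff.mp hi
  rw [Chebyshev.eval_T_real_node (Finset.mem_Iic.mpr hi'), Finset.prod_div_distrib,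
    Finset.prod_div_distrib, ← Finset.abs_prod]
  have h := Chebyshev.zero_lt_prod_node_sub_node hi'
  have h2 : |∏ j ∈ (Finset.range (d + 1)).erase i, (Chebyshev.node d i - Chebyshev.node d j)|
      = (-1) ^ i * ∏ j ∈ (Finset.range (d + 1)).erase i,
        (Chebyshev.node d i - Chebyshev.node d j) := by
    rw [← abs_of_pos h, abs_mul, abs_neg_one_pow, one_mul]
  rw [h2]
  rcases neg_one_pow_eq_or ℝ i with h3 | h3 <;> rw [h3]
  · simp
  · rw [neg_one_mul, neg_one_mul, div_neg]

lemma core (d : ℕ) (f : ℝ[X]) (hdeg : f.natDegree ≤ d)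
    (ε x L m : ℝ) (hε : 0 < ε) (hm : 0 < m) (hmL : m ≤ L) (Y : ℝ → ℝ)
    (h1 : ∀ s ∈ Set.Icc (0 : ℝ) 1, |f.eval (Y s)| ≤ ε)
    (h2 : ∀ s ∈ Set.Icc (0 : ℝ) 1, ∀ t ∈ Set.Icc (0 : ℝ) 1, m * |s - t| ≤ |Y s - Y t|)
    (h3 : ∀ s ∈ Set.Icc (0 : ℝ) 1, |x - Y s| ≤ L - m * s) :
    |f.eval x| ≤ ε * (4 * L / m) ^ d := by
  set z : ℝ := 2 * L / m - 1 with hz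
  have hLm : 1 ≤ L / m := by rw [le_div_iff₀ hm]; linarith
  have hz2 : z = 2 * (L / m) - 1 := by rw [hz]; ring
  have hz1 : 1 ≤ z := by linarith
  have hmz : m * (z + 1) = 2 * L := by rw [hz]; field_simp; ring
  set c : ℕ → ℝ := fun i => (1 + Chebyshev.node d i) / 2 with hc
  have hcm : ∀ i, c i ∈ Set.Icc (0 : ℝ) 1 := by
    intro i
    have := Chebyshev.node_mem_Icc (n := d) (i := i)
    simp only [hc, Set.mem_Icc] at this ⊢
    constructor <;> linarith [this.1, this.2]
  have hpos : ∀ i ∈ Finset.range (d + 1), ∀ j ∈ Finset.range (d + 1), i ≠ j →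
      0 < |Chebyshev.node d i - Chebyshev.node d j| := by
    intro i hi j hj hij
    exact abs_pos.mpr (sub_ne_zero.mpr fun h => hij ((Chebyshev.strictAntiOn_node d).injOn hi hj h))
  have hsep : ∀ i j, m / 2 * |Chebyshev.node d i - Chebyshev.node d j| ≤ |Y (c i) - Y (c j)| := by
    intro i j
    have := h2 _ (hcm i) _ (hcm j)
    have e : c i - c j = (1 / 2) * (Chebyshev.node d i - Chebyshev.node d j) := by
      simp only [hc]; ring
    rw [e, abs_mul, abs_of_pos (by norm_num : (0 : ℝ) < 1 / 2)] at this
    linarith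
  have hinj : Set.InjOn (fun i => Y (c i)) (Finset.range (d + 1)) := by
    intro i hi j hj h
    by_contra hij
    have a := hpos i hi j hj hij
    have b := hsep i j
    simp only at h
    rw [h, sub_self, abs_zero] at b
    nlinarith
  rw [eval_lagrange d f hdeg _ hinj x]
  have key : |∑ i ∈ Finset.range (d + 1), f.eval (Y (c i)) *
      ∏ j ∈ (Finset.range (d + 1)).erase i, (x - Y (c j)) / (Y (c i) - Y (c j))| ≤
      ε * (Chebyshev.T ℝ d).eval z := by
    rw [T_eq_sum, Finset.mul_sum]
    refine (Finset.abs_sum_le_sum_abs _ _).trans (Finset.sum_le_sum fun i hi => ?_)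
    rw [abs_mul, Finset.abs_prod]
    refine mul_le_mul (h1 _ (hcm i)) ?_ (Finset.prod_nonneg fun _ _ => abs_nonneg _) hε.le
    refine Finset.prod_le_prod (fun _ _ => abs_nonneg _) fun j hj => ?_
    have hp := hpos i hi j (Finset.mem_of_mem_erase hj) (Finset.ne_of_mem_erase hj).symm
    have hx := h3 _ (hcm j)
    have e : L - m * c j = m / 2 * (z - Chebyshev.node d j) := by
      simp only [hc]; linarith
    rw [e] at hx
    rw [abs_div]
    calc |x - Y (c j)| / |Y (c i) - Y (c j)|
        ≤ (m / 2 * (z - Chebyshev.node d j)) /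
          (m / 2 * |Chebyshev.node d i - Chebyshev.node d j|) :=
          div_le_div₀ ((abs_nonneg _).trans hx) hx (by positivity) (hsep i j)
      _ = _ := by rw [mul_div_mul_left _ _ (by positivity)]
  refine key.trans (mul_le_mul_of_nonneg_left ((T_le_pow z hz1 d).trans ?_) hε.le)
  refine pow_le_pow_left₀ (by linarith) ?_ d
  have : 4 * L / m = 4 * (L / m) := by ring
  linarith

lemma g_diff (E : Set ℝ) (hE : IsCompact E) (x y : ℝ) :
    |volume.real (E ∩ Set.Iic x) - volume.real (E ∩ Set.Iic y)| ≤ |x - y| := by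
  wlog h : x ≤ y generalizing x y
  · rw [abs_sub_comm, abs_sub_comm x]; exact this y x (le_of_not_ge h)
  have hf : ∀ s, volume (E ∩ s) ≠ ⊤ := fun s =>
    ne_top_of_le_ne_top hE.measure_lt_top.ne (measure_mono Set.inter_subset_left)
  have a : volume.real (E ∩ Set.Iic x) ≤ volume.real (E ∩ Set.Iic y) :=
    measureReal_mono (Set.inter_subset_inter_right _ (Set.Iic_subset_Iic.mpr h)) (hf _)
  have b : volume.real (E ∩ Set.Iic y) ≤ volume.real (E ∩ Set.Iic x) + volume.real (Set.Icc x y) := by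
    refine (measureReal_mono ?_ ?_).trans (measureReal_union_le _ _)
    · rintro t ⟨ht, hty⟩
      rcases le_total t x with h | h
      · exact Or.inl ⟨ht, h⟩
      · exact Or.inr ⟨h, hty⟩
    · exact (measure_union_lt_top (hf _).lt_top (by simp)).ne
  rw [Real.volume_real_Icc_of_le h] at b
  rw [abs_sub_comm, abs_of_nonneg (by linarith), abs_sub_comm, abs_of_nonneg (by linarith)]
  linarith

lemma select (E : Set ℝ) (hE : IsCompact E) (hne : E.Nonempty) (t : ℝ)
    (ht : t ∈ Set.Icc 0 (volume.real E)) :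
    ∃ y ∈ E, volume.real (E ∩ Set.Iic y) = t := by
  set g : ℝ → ℝ := fun y => volume.real (E ∩ Set.Iic y) with hg
  have hcont : Continuous g := by
    refine LipschitzWith.continuous (K := 1) (LipschitzWith.of_dist_le_mul fun x y => ?_)
    simpa [Real.dist_eq] using g_diff E hE x y
  have hI := hE.sInf_mem hne
  have hS := hE.sSup_mem hne
  have g0 : g (sInf E) = 0 := by
    have : E ∩ Set.Iic (sInf E) ⊆ {sInf E} := fun u hu =>
      le_antisymm hu.2 (csInf_le hE.bddBelow hu.1)
    have h := measureReal_mono (μ := volume) this (by simp)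
    have h0 : volume.real ({sInf E} : Set ℝ) = 0 := by simp [measureReal_def]
    exact le_antisymm (h.trans h0.le) measureReal_nonneg
  have g1 : g (sSup E) = volume.real E := by
    simp only [hg]
    have : E ⊆ Set.Iic (sSup E) := fun u hu => le_csSup hE.bddAbove hu
    rw [Set.inter_eq_left.mpr this]
  have hle : sInf E ≤ sSup E := csInf_le hE.bddBelow hS
  obtain ⟨y, hy, hyt⟩ := intermediate_value_Icc hle hcont.continuousOn (by rwa [g0, g1] : t ∈ _)
  have hK : IsCompact (E ∩ Set.Iic y) := hE.inter_right isClosed_Iic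
  have hKn : (E ∩ Set.Iic y).Nonempty := ⟨sInf E, hI, hy.1⟩
  have hm := hK.sSup_mem hKn
  refine ⟨_, hm.1, ?_⟩
  rw [← hyt]
  simp only [hg]
  congr 1
  ext u
  exact ⟨fun hu => ⟨hu.1, le_trans (Set.mem_Iic.mp hu.2) (Set.mem_Iic.mp hm.2)⟩, fun hu => ⟨hu.1, le_csSup hK.bddAbove hu⟩⟩

lemma side_right (d : ℕ) (f : ℝ[X]) (hdeg : f.natDegree ≤ d) (ε a b : ℝ) (hε : 0 < ε)
    (E : Set ℝ) (hE : IsCompact E) (hf : ∀ t ∈ E, |f.eval t| ≤ ε) (hab : E ⊆ Set.Icc a b)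
    (hm : 0 < volume.real E) :
    |f.eval b| ≤ ε * (4 * (b - a) / volume.real E) ^ d ∧
    |f.eval a| ≤ ε * (4 * (b - a) / volume.real E) ^ d := by
  have hne : E.Nonempty := by
    by_contra h
    rw [Set.not_nonempty_iff_eq_empty] at h
    simp [h] at hm
  obtain ⟨e, he⟩ := hne
  have hle : a ≤ b := (hab he).1.trans (hab he).2
  have hmL : volume.real E ≤ b - a := by
    have := measureReal_mono (μ := volume) hab (by simp)
    rwa [Real.volume_real_Icc_of_le hle] at this
  have hex : ∀ s : ℝ, ∃ y, s ∈ Set.Icc (0 : ℝ) 1 →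
      y ∈ E ∧ volume.real (E ∩ Set.Iic y) = volume.real E * s := by
    intro s
    by_cases hs : s ∈ Set.Icc (0 : ℝ) 1
    · obtain ⟨y, hy, h⟩ := select E hE ⟨e, he⟩ (volume.real E * s)
        ⟨mul_nonneg hm.le hs.1, by nlinarith [hs.2]⟩
      exact ⟨y, fun _ => ⟨hy, h⟩⟩
    · exact ⟨0, fun h => absurd h hs⟩
  choose Y hY using hex
  have hsep : ∀ s ∈ Set.Icc (0 : ℝ) 1, ∀ t ∈ Set.Icc (0 : ℝ) 1,
      volume.real E * |s - t| ≤ |Y s - Y t| := by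
    intro s hs t ht
    have := g_diff E hE (Y s) (Y t)
    rwa [(hY s hs).2, (hY t ht).2, ← mul_sub, abs_mul, abs_of_pos hm] at this
  constructor
  · refine core d f hdeg ε b (b - a) _ hε hm hmL Y (fun s hs => hf _ (hY s hs).1) hsep ?_
    intro s hs
    have h := hab (hY s hs).1
    have h2 := g_diff E hE (Y s) a
    have h3 : volume.real (E ∩ Set.Iic a) = 0 := by
      have : E ∩ Set.Iic a ⊆ {a} := fun u hu => le_antisymm hu.2 (hab hu.1).1
      have h := measureReal_mono (μ := volume) this (by simp)
      have h0 : volume.real ({a} : Set ℝ) = 0 := by simp [measureReal_def]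
      exact le_antisymm (h.trans h0.le) measureReal_nonneg
    rw [h3, (hY s hs).2, sub_zero, abs_of_nonneg (mul_nonneg hm.le hs.1),
      abs_of_nonneg (sub_nonneg.mpr h.1)] at h2
    rw [abs_of_nonneg (sub_nonneg.mpr h.2)]
    linarith
  · have hr : ∀ s ∈ Set.Icc (0 : ℝ) 1, 1 - s ∈ Set.Icc (0 : ℝ) 1 := fun s hs =>
      ⟨by linarith [hs.2], by linarith [hs.1]⟩
    refine core d f hdeg ε a (b - a) _ hε hm hmL (fun s => Y (1 - s))
      (fun s hs => hf _ (hY _ (hr s hs)).1) ?_ ?_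
    · intro s hs t ht
      have := hsep _ (hr s hs) _ (hr t ht)
      rwa [sub_sub_sub_cancel_left, abs_sub_comm t s] at this
    · intro s hs
      have hs' := hr s hs
      have h := hab (hY _ hs').1
      have h2 := g_diff E hE b (Y (1 - s))
      have h3 : E ∩ Set.Iic b = E := Set.inter_eq_left.mpr fun u hu => (hab hu).2
      rw [h3, (hY _ hs').2, abs_of_nonneg (sub_nonneg.mpr h.2)] at h2
      have h4 := le_of_abs_le h2
      rw [abs_sub_comm, abs_of_nonneg (sub_nonneg.mpr h.1)]
      linarith

/-- One-dimensional sub-level ((C,α)-good) estimate from Remez' inequality: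
for a polynomial of degree ≤ d with sup-norm `S > 0` on `[0,1]`,
the set where `|f| < ε` has measure at most `4(ε/S)^{1/d}`. -/
theorem sublevel_estimate_polynomial (d : ℕ) (hd : 1 ≤ d)
    (f : Polynomial ℝ) (hdeg : f.natDegree ≤ d)
    (S : ℝ) (hS : S = sSup ((fun t => |f.eval t|) '' Set.Icc (0 : ℝ) 1)) (hSpos : 0 < S)
    (ε : ℝ) (hε : 0 < ε) :
    volume {t ∈ Set.Icc (0 : ℝ) 1 | |f.eval t| < ε} ≤
      ENNReal.ofReal (4 * (ε / S) ^ (1 / (d : ℝ))) := by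
  have hcf : Continuous fun t => |f.eval t| := f.continuous.abs
  obtain ⟨x, hx, hxS⟩ : ∃ x ∈ Set.Icc (0 : ℝ) 1, |f.eval x| = S := by
    have := (isCompact_Icc.image hcf).sSup_mem ((Set.nonempty_Icc.mpr zero_le_one).image _)
    rw [← hS] at this
    exact this
  set E : Set ℝ := Set.Icc (0 : ℝ) 1 ∩ {t | |f.eval t| ≤ ε} with hEdef
  have hE : IsCompact E := isCompact_Icc.inter_right (isClosed_le hcf continuous_const)
  have hsub : {t ∈ Set.Icc (0 : ℝ) 1 | |f.eval t| < ε} ⊆ E := fun t ht => ⟨ht.1, ht.2.le⟩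
  refine (measure_mono hsub).trans ?_
  rw [← ENNReal.ofReal_toReal hE.measure_lt_top.ne]
  refine ENNReal.ofReal_le_ofReal ?_
  change volume.real E ≤ _
  rcases (measureReal_nonneg (μ := volume) (s := E)).eq_or_lt with h0 | hM
  · rw [← h0]; positivity
  set M := volume.real E with hMdef
  have hfin : ∀ L m : ℝ, 0 < m → 0 ≤ L → M * L ≤ m → S ≤ ε * (4 * L / m) ^ d →
      M ≤ 4 * (ε / S) ^ (1 / (d : ℝ)) := by
    intro L m hm hL hML hSle
    have h1 : 4 * L / m ≤ 4 / M := by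
      rw [div_le_div_iff₀ hm hM]; nlinarith
    have h2 : S ≤ ε * (4 / M) ^ d := hSle.trans
      (mul_le_mul_of_nonneg_left (pow_le_pow_left₀ (by positivity) h1 d) hε.le)
    have h3 : (M / 4) ^ d ≤ ε / S := by
      rw [le_div_iff₀ hSpos]
      calc (M / 4) ^ d * S ≤ (M / 4) ^ d * (ε * (4 / M) ^ d) := by gcongr
        _ = ε * ((M / 4) * (4 / M)) ^ d := by rw [mul_pow]; ring
        _ = ε := by rw [show M / 4 * (4 / M) = 1 by field_simp]; simp
    have h4 : M / 4 ≤ (ε / S) ^ (1 / (d : ℝ)) := by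
      have h5 := Real.rpow_le_rpow (by positivity) h3 (by positivity : (0 : ℝ) ≤ 1 / (d : ℝ))
      rwa [one_div, Real.pow_rpow_inv_natCast (by positivity) (by omega), ← one_div] at h5
    linarith
  have hE1 : IsCompact (E ∩ Set.Iic x) := hE.inter_right isClosed_Iic
  have hE2 : IsCompact (E ∩ Set.Ici x) := hE.inter_right isClosed_Ici
  have hs1 : E ∩ Set.Iic x ⊆ Set.Icc 0 x := fun t ht => ⟨ht.1.1.1, ht.2⟩
  have hs2 : E ∩ Set.Ici x ⊆ Set.Icc x 1 := fun t ht => ⟨ht.2, ht.1.1.2⟩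
  have hsum : M ≤ volume.real (E ∩ Set.Iic x) + volume.real (E ∩ Set.Ici x) := by
    refine (measureReal_mono ?_ ?_).trans (measureReal_union_le _ _)
    · intro t ht
      rcases le_total t x with h | h
      · exact Or.inl ⟨ht, h⟩
      · exact Or.inr ⟨ht, h⟩
    · exact (measure_union_lt_top hE1.measure_lt_top hE2.measure_lt_top).ne
  have hm1 : volume.real (E ∩ Set.Iic x) ≤ x - 0 := by
    have := measureReal_mono (μ := volume) hs1 (by simp)
    rwa [Real.volume_real_Icc_of_le hx.1] at this
  have case1 : 0 < volume.real (E ∩ Set.Iic x) → M * x ≤ volume.real (E ∩ Set.Iic x) →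
      M ≤ 4 * (ε / S) ^ (1 / (d : ℝ)) := by
    intro hp h
    have := (side_right d f hdeg ε 0 x hε _ hE1 (fun t ht => ht.1.2) hs1 hp).1
    rw [hxS, sub_zero] at this
    exact hfin x _ hp hx.1 h this
  have case2 : 0 < volume.real (E ∩ Set.Ici x) → M * (1 - x) ≤ volume.real (E ∩ Set.Ici x) →
      M ≤ 4 * (ε / S) ^ (1 / (d : ℝ)) := by
    intro hp h
    have := (side_right d f hdeg ε x 1 hε _ hE2 (fun t ht => ht.1.2) hs2 hp).2
    rw [hxS] at this
    exact hfin (1 - x) _ hp (by linarith [hx.2]) h this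
  rcases lt_or_ge (volume.real (E ∩ Set.Iic x)) (M * x) with h | h
  · have : M * (1 - x) < volume.real (E ∩ Set.Ici x) := by linarith
    exact case2 (lt_of_le_of_lt (mul_nonneg hM.le (by linarith [hx.2])) this) this.le
  · rcases hx.1.eq_or_lt with h0 | h0
    · rw [← h0] at hm1 hsum case2
      exact case2 (by linarith) (by linarith)
    · exact case1 (lt_of_lt_of_le (mul_pos hM h0) h) h
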